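/- Let occ(σ) be the number of occurrences in σ of the mesh pattern Nr. 63, where an occurrence is a pair of indices i < j with σ_i < σ_j = b such that: every element before position i has value greater than b; every element strictly between positions i and j has value less than b; and every element after position j has value greater than b. Let E(t,u) = Σ_{n≥0} t^n Σ_{σ∈K_n} u^{occ(σ)}. Then (u − t(1−u+ut) + (1−u)·A(t))·E(t,u) = (2−u−ut^2)·A(t) − (1−u)(1+t) as formal power series in t over ℚ[u]. In particular, at u = 0 the generating function P(t) for king permutations avoiding this pattern satisfies (A(t) − t)·P(t) = 2·A(t) − t − 1. -/

import Mathlib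

/-- A permutation of `{0, …, n-1}` is a *king permutation* if consecutive entries
differ by more than 1 in absolute value. -/
def IsKing {n : ℕ} (σ : Equiv.Perm (Fin n)) : Prop :=
  ∀ i : Fin n, ∀ h : (i : ℕ) + 1 < n,
    1 < |((σ ⟨(i : ℕ) + 1, h⟩ : ℕ) : ℤ) - ((σ i : ℕ) : ℤ)|

/-- `kingCount n = A_n`, the number of king permutations of length `n`. -/
noncomputable def kingCount (n : ℕ) : ℕ :=
  Nat.card {σ : Equiv.Perm (Fin n) // IsKing σ}

/-- `A(t)` regarded as a power series over `ℚ[u]` (constant-polynomial coefficients). -/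
noncomputable def kingAu : PowerSeries (Polynomial ℚ) :=
  PowerSeries.mk fun n => (kingCount n : Polynomial ℚ)

/-- `u` viewed as a constant power series over `ℚ[u]`. -/
noncomputable def U : PowerSeries (Polynomial ℚ) :=
  PowerSeries.C (R := Polynomial ℚ) Polynomial.X

/-- `t`, the power series variable. -/
noncomputable def T : PowerSeries (Polynomial ℚ) :=
  PowerSeries.X

/-- An occurrence of the mesh pattern Nr. 63 in `σ`. -/
def OccP {n : ℕ} (σ : Equiv.Perm (Fin n)) (i j : Fin n) : Prop :=
  i < j ∧ σ i < σ j ∧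
    (∀ k : Fin n, k < i → σ j < σ k) ∧
    (∀ k : Fin n, i < k → k < j → σ k < σ j) ∧
    (∀ k : Fin n, j < k → σ j < σ k)

/-- The number of occurrences of the mesh pattern Nr. 63 in `σ`. -/
noncomputable def occP {n : ℕ} (σ : Equiv.Perm (Fin n)) : ℕ :=
  Nat.card {p : Fin n × Fin n // OccP σ p.1 p.2}

-- `E(t,u) = Σ_{n≥0} t^n Σ_{σ∈K_n} u^{occ(σ)}`, a power series in `t` over `ℚ[u]`.
open Classical in
noncomputable def Etu : PowerSeries (Polynomial ℚ) :=
  PowerSeries.mk fun n =>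
    ∑ σ : Equiv.Perm (Fin n),
      if IsKing σ then (Polynomial.X : Polynomial ℚ) ^ occP σ else 0

/-- `A(t) = Σ_{n≥0} A_n t^n` as a formal power series over `ℚ`. -/
noncomputable def kingA : PowerSeries ℚ :=
  PowerSeries.mk fun n => (kingCount n : ℚ)

/-- The generating function for king permutations avoiding the pattern. -/
noncomputable def Pav : PowerSeries ℚ :=
  PowerSeries.mk fun n =>
    (Nat.card {σ : Equiv.Perm (Fin n) // IsKing σ ∧ occP σ = 0} : ℚ)


namespace KingAux

open List

def far (x y : ℕ) : Prop := x + 1 < y ∨ y + 1 < x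
def r10 (x y : ℕ) : Prop := far x y ∨ (x = 1 ∧ y = 0)
def r01 (x y : ℕ) : Prop := far x y ∨ (x = 0 ∧ y = 1)

def IsOcc (l : List ℕ) (b : ℕ) : Prop :=
  ∃ A F C, l = A ++ F ++ b :: C ∧ F ≠ [] ∧ (∀ x ∈ F, x < b) ∧ (∀ x ∈ A, b < x) ∧ (∀ x ∈ C, b < x)

noncomputable def occ (l : List ℕ) : ℕ := Set.ncard {b | IsOcc l b}

lemma IsOcc.mem {l : List ℕ} {b : ℕ} (h : IsOcc l b) : b ∈ l := by
  obtain ⟨A, F, C, rfl, -⟩ := h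
  simp

lemma occ_finite (l : List ℕ) : {b | IsOcc l b}.Finite :=
  (List.finite_toSet l).subset fun _ hb => hb.mem

lemma IsOcc.pos {l : List ℕ} {b : ℕ} (h : IsOcc l b) : 0 < b := by
  obtain ⟨A, F, C, rfl, hF, h1, -⟩ := h
  obtain ⟨x, hx⟩ := List.exists_mem_of_ne_nil F hF
  have := h1 x hx
  omega

lemma isOcc_left {α l : List ℕ} {b : ℕ} (h : ∀ x ∈ α, b < x) : IsOcc (α ++ l) b ↔ IsOcc l b := by
  induction α with
  | nil => simp
  | cons a α ih =>
    have ha := h a (by simp)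
    rw [← ih (fun x hx => h x (by simp [hx])), List.cons_append]
    constructor
    · rintro ⟨A, F, C, e, hF, h1, h2, h3⟩
      cases A with
      | nil =>
        cases F with
        | nil => exact absurd rfl hF
        | cons f F =>
          simp at e
          have := h1 f (by simp)
          omega
      | cons x A =>
        simp at e
        exact ⟨A, F, C, by simp [e.2], hF, h1, fun x hx => h2 x (by simp [hx]), h3⟩
    · rintro ⟨A, F, C, e, hF, h1, h2, h3⟩
      exact ⟨a :: A, F, C, by simp [e], hF, h1, by simpa using ⟨ha, h2⟩, h3⟩

lemma isOcc_right {γ l : List ℕ} {b : ℕ} (h : ∀ x ∈ γ, b < x) : IsOcc (l ++ γ) b ↔ IsOcc l b := by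
  induction γ using List.reverseRecOn with
  | nil => simp
  | append_singleton γ a ih =>
    have ha := h a (by simp)
    rw [← ih (fun x hx => h x (by simp [hx]))]
    constructor
    · rintro ⟨A, F, C, e, hF, h1, h2, h3⟩
      rcases List.eq_nil_or_concat C with rfl | ⟨C, z, rfl⟩
      · rw [← List.append_assoc] at e
        have := (List.append_inj' e rfl).2
        simp at this
        omega
      · have e' : (l ++ γ) ++ [a] = (A ++ F ++ b :: C) ++ [z] := by simpa using e
        have := (List.append_inj' e' rfl).1
        exact ⟨A, F, C, this, hF, h1, h2, fun x hx => h3 x (by simp [hx])⟩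
    · rintro ⟨A, F, C, e, hF, h1, h2, h3⟩
      refine ⟨A, F, C ++ [a], by rw [← List.append_assoc, e]; simp, hF, h1, h2, ?_⟩
      intro x hx
      simp at hx
      rcases hx with hx | rfl
      · exact h3 x hx
      · exact ha

lemma isOcc_low {α τ γ : List ℕ} {b : ℕ} (h : ∀ x ∈ α, b < x) (h' : ∀ x ∈ γ, b < x) :
    IsOcc (α ++ τ ++ γ) b ↔ IsOcc τ b := by
  rw [isOcc_right h', isOcc_left h]

lemma isOcc_high {α τ γ : List ℕ} {b : ℕ} (hτ : τ ≠ []) (h : ∀ x ∈ τ, x < b) :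
    IsOcc (α ++ τ ++ γ) b ↔
      (∃ A F, α = A ++ F ∧ (∀ x ∈ A, b < x) ∧ (∀ x ∈ F, x < b)) ∧
      (∃ G C, γ = G ++ b :: C ∧ (∀ x ∈ G, x < b) ∧ (∀ x ∈ C, b < x)) := by
  constructor
  · rintro ⟨A, F, C, e, hF, h1, h2, h3⟩
    obtain ⟨τ', z, rfl⟩ : ∃ τ' z, τ = τ' ++ [z] := by
      rcases List.eq_nil_or_concat τ with rfl | ⟨C, z, rfl⟩
      · exact absurd rfl hτ
      · exact ⟨C, z, by simp⟩
    have hz := h z (by simp)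
    rw [List.append_eq_append_iff] at e
    have e2 : ∃ cs, A ++ F = α ++ (τ' ++ [z]) ++ cs ∧ γ = cs ++ b :: C := by
      rcases e with e | ⟨bs, e, e'⟩
      · exact e
      · rcases List.eq_nil_or_concat bs with rfl | ⟨bs, w, rfl⟩
        · exact ⟨[], by simpa using e.symm, by simpa using e'.symm⟩
        · exfalso
          have e1 : (α ++ τ') ++ [z] = (A ++ F ++ bs) ++ [w] := by simpa using e
          have e3 := (List.append_inj' e1 rfl).2
          simp at e3
          subst e3
          have : z ∈ b :: C := by rw [e']; simp
          simp at this
          rcases this with rfl | this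
          · omega
          · have := h3 z this; omega
    obtain ⟨cs, e2, rfl⟩ := e2
    rw [List.append_assoc, List.append_eq_append_iff] at e2
    rcases e2 with ⟨as, e3, e4⟩ | ⟨bs, e3, e4⟩
    · subst e4
      refine ⟨⟨A, as, e3, h2, fun x hx => h1 x (by simp [hx])⟩,
        ⟨cs, C, rfl, fun x hx => h1 x (by simp [hx]), h3⟩⟩
    · subst e3
      cases bs with
      | nil =>
        simp at e4
        subst e4
        refine ⟨⟨α, [], by simp, fun x hx => h2 x (by simp [hx]), by simp⟩,
          ⟨cs, C, rfl, fun x hx => h1 x (by simp [hx]), h3⟩⟩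
      | cons w bs =>
        exfalso
        have hw := h2 w (by simp)
        cases τ' with
        | nil => simp at e4; omega
        | cons y τ' =>
          simp at e4
          have := h y (by simp)
          omega
  · rintro ⟨⟨A, F, rfl, h1, h2⟩, ⟨G, C, rfl, h3, h4⟩⟩
    refine ⟨A, F ++ τ ++ G, C, by simp, by simp [hτ], ?_, h1, h4⟩
    intro x hx
    simp at hx
    rcases hx with hx | hx | hx
    · exact h2 x hx
    · exact h x hx
    · exact h3 x hx

lemma ex_left_shift {α : List ℕ} {b c : ℕ} :
    (∃ A F, α.map (· + c) = A ++ F ∧ (∀ x ∈ A, b + c < x) ∧ (∀ x ∈ F, x < b + c)) ↔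
    (∃ A F, α = A ++ F ∧ (∀ x ∈ A, b < x) ∧ (∀ x ∈ F, x < b)) := by
  constructor
  · rintro ⟨A, F, e, h1, h2⟩
    obtain ⟨A, F, rfl, rfl, rfl⟩ := List.map_eq_append_iff.1 e
    exact ⟨A, F, rfl, by simpa using h1, by simpa using h2⟩
  · rintro ⟨A, F, rfl, h1, h2⟩
    exact ⟨_, _, List.map_append, by simpa using h1, by simpa using h2⟩

lemma ex_right_shift {γ : List ℕ} {b c : ℕ} :
    (∃ G C, γ.map (· + c) = G ++ (b + c) :: C ∧ (∀ x ∈ G, x < b + c) ∧ (∀ x ∈ C, b + c < x)) ↔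
    (∃ G C, γ = G ++ b :: C ∧ (∀ x ∈ G, x < b) ∧ (∀ x ∈ C, b < x)) := by
  constructor
  · rintro ⟨A, F, e, h1, h2⟩
    obtain ⟨A, F', rfl, rfl, e1⟩ := List.map_eq_append_iff.1 e
    obtain ⟨d, F, rfl, e2, rfl⟩ := List.map_eq_cons_iff.1 e1
    obtain rfl : d = b := by omega
    exact ⟨A, F, rfl, by simpa using h1, by simpa using h2⟩
  · rintro ⟨A, F, rfl, h1, h2⟩
    exact ⟨A.map (· + c), F.map (· + c), by simp, by simpa using h1, by simpa using h2⟩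

def IsPerm (n : ℕ) (l : List ℕ) : Prop := l.Nodup ∧ ∀ x, x ∈ l ↔ x < n

lemma IsPerm.length {n : ℕ} {l : List ℕ} (h : IsPerm n l) : l.length = n := by
  have : l.Perm (List.range n) := by
    rw [List.perm_ext_iff_of_nodup h.1 List.nodup_range]
    simpa using h.2
  simpa using this.length_eq

/-- occurrences in an inflation -/
lemma occ_inflate {c : ℕ} {α τ γ : List ℕ} (hτ : IsPerm (c + 1) τ)
    (hα : ∀ x ∈ α, 0 < x) (hγ : ∀ x ∈ γ, 0 < x) :
    occ (α.map (· + c) ++ τ ++ γ.map (· + c)) = occ τ + occ (α ++ 0 :: γ) := by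
  have hne : τ ≠ [] := by
    rintro rfl
    have := (hτ.2 0).2 (by omega)
    simp at this
  have hset : {b | IsOcc (α.map (· + c) ++ τ ++ γ.map (· + c)) b} =
      {b | IsOcc τ b} ∪ (fun b => b + c) '' {b | IsOcc (α ++ 0 :: γ) b} := by
    ext b
    simp only [Set.mem_union, Set.mem_ofPred_eq, Set.mem_image]
    have hhigh : ∀ b', 0 < b' → (IsOcc (α.map (· + c) ++ τ ++ γ.map (· + c)) (b' + c) ↔
        IsOcc (α ++ 0 :: γ) b') := by
      intro b' hb'
      rw [isOcc_high hne (fun x hx => by have := (hτ.2 x).1 hx; omega)]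
      have : α ++ 0 :: γ = α ++ [0] ++ γ := by simp
      rw [this, isOcc_high (by simp) (by simpa using hb'), ex_left_shift, ex_right_shift]
    have hlow : b ≤ c → (IsOcc (α.map (· + c) ++ τ ++ γ.map (· + c)) b ↔ IsOcc τ b) := by
      intro hb
      apply isOcc_low
      · intro x hx
        simp at hx
        obtain ⟨a, ha, rfl⟩ := hx
        have := hα a ha
        omega
      · intro x hx
        simp at hx
        obtain ⟨a, ha, rfl⟩ := hx
        have := hγ a ha
        omega
    constructor
    · intro h
      by_cases hb : b ≤ c
      · exact Or.inl ((hlow hb).1 h)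
      · right
        refine ⟨b - c, ?_, by omega⟩
        rw [← hhigh _ (by omega)]
        rwa [Nat.sub_add_cancel (by omega)]
    · rintro (h | ⟨b', h, rfl⟩)
      · have := (hτ.2 b).1 h.mem
        exact (hlow (by omega)).2 h
      · exact (hhigh _ h.pos).2 h
  unfold occ
  rw [hset, Set.ncard_union_eq ?_ (occ_finite _) ((occ_finite _).image _),
    Set.ncard_image_of_injective]
  · intro x y h
    simpa using h
  · rw [Set.disjoint_left]
    rintro b h ⟨b', h', rfl⟩
    have h1 := (hτ.2 _).1 (IsOcc.mem h)
    have h2 := IsOcc.pos h'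
    simp only at h1
    omega

lemma chain_inflate {c : ℕ} {α τ γ : List ℕ} {Q Q' : ℕ → ℕ → Prop} (hne : τ ≠ [])
    (hα : ∀ x ∈ α, 0 < x) (hγ : ∀ x ∈ γ, 0 < x)
    (h1 : ∀ x y, 0 < x → 0 < y → (Q (x + c) (y + c) ↔ Q' x y))
    (h2 : ∀ x, 0 < x → ∀ h ∈ τ.head?, (Q (x + c) h ↔ Q' x 0))
    (h3 : ∀ y, 0 < y → ∀ h ∈ τ.getLast?, (Q h (y + c) ↔ Q' 0 y))
    (hQ : List.IsChain Q τ) :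
    List.IsChain Q (α.map (· + c) ++ τ ++ γ.map (· + c)) ↔ List.IsChain Q' (α ++ 0 :: γ) := by
  have hc : ∀ l : List ℕ, (∀ x ∈ l, 0 < x) →
      (List.IsChain Q (l.map (· + c)) ↔ List.IsChain Q' l) := by
    intro l hl
    rw [List.isChain_map, List.isChain_iff_getElem, List.isChain_iff_getElem]
    refine forall_congr' fun i => forall_congr' fun hi => ?_
    exact h1 _ _ (hl _ (List.getElem_mem _)) (hl _ (List.getElem_mem _))
  have e : α ++ 0 :: γ = α ++ [0] ++ γ := by simp
  obtain ⟨z, hz⟩ : ∃ z, z ∈ τ.getLast? := ⟨_, List.getLast?_eq_some_getLast hne⟩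
  obtain ⟨w, hw⟩ : ∃ w, w ∈ τ.head? := ⟨_, List.head?_eq_some_head hne⟩
  have hz' : τ.getLast? = some z := hz
  have hw' : τ.head? = some w := hw
  rw [e, List.isChain_append, List.isChain_append, List.isChain_append, List.isChain_append,
    hc α hα, hc γ hγ]
  have hγ' : ∀ y ∈ γ.head?, 0 < y := fun y hy => hγ y (List.mem_of_mem_head? hy)
  have hα' : ∀ y ∈ α.getLast?, 0 < y := fun y hy => hα y (List.mem_of_mem_getLast? hy)
  simp only [List.getLast?_append, hz', hw', List.head?_map, List.getLast?_map, hQ,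
    List.isChain_singleton, true_and, List.head?_cons, List.getLast?_singleton]
  have a1 : (∀ x ∈ Option.map (fun x => x + c) α.getLast?, ∀ y ∈ some w, Q x y) ↔
      (∀ x ∈ α.getLast?, ∀ y ∈ some 0, Q' x y) := by
    cases h : α.getLast? with
    | none => simp
    | some a => simpa using h2 a (hα' a h) w hw
  have a2 : (∀ x ∈ (some z).or (Option.map (fun x => x + c) α.getLast?),
      ∀ y ∈ Option.map (fun x => x + c) γ.head?, Q x y) ↔
      (∀ x ∈ (some 0).or α.getLast?, ∀ y ∈ γ.head?, Q' x y) := by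
    cases h : γ.head? with
    | none => simp
    | some a => simpa using h3 a (hγ' a h) z hz
  rw [a1, a2]

def infl (c : ℕ) (τ ρ : List ℕ) : List ℕ := ρ.flatMap fun x => if x = 0 then τ else [x + c]

def defl (c : ℕ) (σ : List ℕ) : List ℕ := (σ.filter (c ≤ ·)).map (· - c)

lemma infl_pos {c : ℕ} {τ α : List ℕ} (h : ∀ x ∈ α, 0 < x) : infl c τ α = α.map (· + c) := by
  induction α with
  | nil => rfl
  | cons a α ih =>
    have := h a (by simp)
    have h' := ih (fun x hx => h x (by simp [hx]))
    unfold infl at *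
    rw [List.flatMap_cons, h', if_neg (by omega)]
    simp

lemma infl_split {c : ℕ} {τ α γ : List ℕ} (h : ∀ x ∈ α, 0 < x) (h' : ∀ x ∈ γ, 0 < x) :
    infl c τ (α ++ 0 :: γ) = α.map (· + c) ++ τ ++ γ.map (· + c) := by
  rw [← infl_pos (τ := τ) h, ← infl_pos (τ := τ) h']
  simp [infl]

lemma filter_perm {c : ℕ} {τ : List ℕ} (hτ : IsPerm (c + 1) τ) : τ.filter (c ≤ ·) = [c] := by
  rw [← List.perm_singleton, List.perm_ext_iff_of_nodup (hτ.1.filter _) (by simp)]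
  intro a
  simp [hτ.2]
  omega

lemma defl_split {c : ℕ} {τ α γ : List ℕ} (hτ : IsPerm (c + 1) τ) :
    defl c (α.map (· + c) ++ τ ++ γ.map (· + c)) = α ++ 0 :: γ := by
  have : ∀ l : List ℕ, ((l.map (· + c)).filter (c ≤ ·)).map (· - c) = l := by
    intro l
    rw [List.filter_eq_self.2 (by simp), List.map_map]
    exact (List.map_congr_left (fun x _ => by simp)).trans (List.map_id l)
  unfold defl
  rw [List.filter_append, List.filter_append, filter_perm hτ, List.map_append, List.map_append,
    this, this]
  simp

lemma filter_split {c : ℕ} {τ α γ : List ℕ} (hτ : IsPerm (c + 1) τ)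
    (h : ∀ x ∈ α, 0 < x) (h' : ∀ x ∈ γ, 0 < x) :
    (α.map (· + c) ++ τ ++ γ.map (· + c)).filter (· ≤ c) = τ := by
  have : ∀ l : List ℕ, (∀ x ∈ l, 0 < x) → ((l.map (· + c)).filter (· ≤ c)) = [] := by
    intro l hl
    rw [List.filter_eq_nil_iff]
    intro x hx
    simp at hx
    obtain ⟨a, ha, rfl⟩ := hx
    have := hl a ha
    simp
    omega
  rw [List.filter_append, List.filter_append, this _ h, this _ h', List.filter_eq_self.2]
  · simp
  · intro x hx
    have := (hτ.2 x).1 hx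
    simp
    omega

lemma IsPerm.split {k : ℕ} {ρ : List ℕ} (h : IsPerm (k + 1) ρ) :
    ∃ α γ, ρ = α ++ 0 :: γ ∧ (∀ x ∈ α, 0 < x) ∧ (∀ x ∈ γ, 0 < x) := by
  obtain ⟨α, γ, rfl⟩ := List.append_of_mem ((h.2 0).2 (by omega))
  refine ⟨α, γ, rfl, ?_, ?_⟩
  · intro x hx
    have := h.1
    rw [List.nodup_append] at this
    have := this.2.2 x hx 0 (by simp)
    omega
  · intro x hx
    have := h.1
    rw [List.nodup_append, List.nodup_cons] at this
    rcases Nat.eq_zero_or_pos x with rfl | h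
    · exact absurd hx this.2.1.1
    · exact h

lemma isPerm_inflate {c k : ℕ} {τ α γ : List ℕ} (hτ : IsPerm (c + 1) τ)
    (h : ∀ x ∈ α, 0 < x) (h' : ∀ x ∈ γ, 0 < x) :
    IsPerm (c + k + 1) (α.map (· + c) ++ τ ++ γ.map (· + c)) ↔ IsPerm (k + 1) (α ++ 0 :: γ) := by
  have hp : (α.map (· + c) ++ τ ++ γ.map (· + c)).Perm (τ ++ (α ++ γ).map (· + c)) := by
    rw [List.map_append, ← List.append_assoc]
    exact (List.perm_append_comm).append_right _
  have hp' : (α ++ 0 :: γ).Perm (0 :: (α ++ γ)) := List.perm_middle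
  have hd : ∀ x ∈ α ++ γ, 0 < x := by
    intro x hx
    rcases List.mem_append.1 hx with hx | hx
    · exact h x hx
    · exact h' x hx
  unfold IsPerm
  rw [hp.nodup_iff, hp'.nodup_iff]
  simp only [hp.mem_iff, hp'.mem_iff]
  generalize α ++ γ = δ at hd
  have hinj : Function.Injective (· + c) := fun x y h => by simpa using h
  rw [List.nodup_append, List.nodup_map_iff hinj, List.nodup_cons]
  simp only [hτ.1, true_and, List.mem_append, List.mem_cons, hτ.2, List.mem_map]
  constructor
  · rintro ⟨⟨a1, a2⟩, a3⟩
    refine ⟨⟨fun h0 => by have := hd 0 h0; omega, a1⟩, fun x => ?_⟩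
    have := a3 (x + c)
    rcases Nat.eq_zero_or_pos x with rfl | hx
    · simp
    · constructor
      · rintro (rfl | hx')
        · omega
        · have := this.1 (Or.inr ⟨x, hx', rfl⟩); omega
      · intro hx'
        rcases this.2 (by omega) with h1 | ⟨a, ha, e⟩
        · omega
        · obtain rfl : a = x := by omega
          exact Or.inr ha
  · rintro ⟨⟨a1, a2⟩, a3⟩
    refine ⟨⟨a2, ?_⟩, fun x => ?_⟩
    · rintro x hx _ ⟨a, ha, rfl⟩
      have := hd a ha
      omega
    · constructor
      · rintro (h1 | ⟨a, ha, rfl⟩)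
        · omega
        · have := (a3 a).1 (Or.inr ha)
          omega
      · intro hx
        by_cases hxc : x < c + 1
        · exact Or.inl hxc
        · right
          rcases (a3 (x - c)).2 (by omega) with h1 | h1
          · omega
          · exact ⟨_, h1, by omega⟩

def perms (n : ℕ) : Finset (List ℕ) := (List.range n).permutations.toFinset

lemma mem_perms {n : ℕ} {l : List ℕ} : l ∈ perms n ↔ IsPerm n l := by
  simp only [perms, List.mem_toFinset, List.mem_permutations]
  constructor
  · intro h
    exact ⟨h.nodup_iff.2 List.nodup_range, fun x => by simp [h.mem_iff]⟩
  · intro h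
    rw [List.perm_ext_iff_of_nodup h.1 List.nodup_range]
    simpa using h.2

open Classical in
noncomputable def wsum (Q : ℕ → ℕ → Prop) (n : ℕ) : Polynomial ℚ :=
  ∑ σ ∈ perms n with List.IsChain Q σ, Polynomial.X ^ occ σ

open Classical in
lemma main_sum (c k : ℕ) (Q Q' : ℕ → ℕ → Prop) (S : Finset (List ℕ))
    (h1 : ∀ x y, 0 < x → 0 < y → (Q (x + c) (y + c) ↔ Q' x y))
    (hS : ∀ τ ∈ S, IsPerm (c + 1) τ ∧ List.IsChain Q τ ∧
      (∀ x, 0 < x → ∀ h ∈ τ.head?, (Q (x + c) h ↔ Q' x 0)) ∧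
      (∀ y, 0 < y → ∀ h ∈ τ.getLast?, (Q h (y + c) ↔ Q' 0 y))) :
    (∑ σ ∈ perms (c + k + 1) with (List.IsChain Q σ ∧ ∃ τ ∈ S, τ <:+: σ),
      (Polynomial.X : Polynomial ℚ) ^ occ σ) =
    (∑ τ ∈ S, (Polynomial.X : Polynomial ℚ) ^ occ τ) * wsum Q' (k + 1) := by
  have hne : ∀ τ, IsPerm (c + 1) τ → τ ≠ [] := by
    rintro τ hτ rfl
    have := (hτ.2 0).2 (by omega)
    simp at this
  rw [wsum, Finset.sum_mul_sum, ← Finset.sum_product']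
  symm
  refine Finset.sum_bij (fun p _ => infl c p.1 p.2) ?_ ?_ ?_ ?_
  · rintro ⟨τ, ρ⟩ h
    simp only [Finset.mem_product, Finset.mem_filter, mem_perms] at h ⊢
    obtain ⟨hτ, hρ, hQ'⟩ := h
    obtain ⟨b1, b2, b3, b4⟩ := hS τ hτ
    obtain ⟨α, γ, rfl, hα, hγ⟩ := hρ.split
    rw [infl_split hα hγ]
    exact ⟨(isPerm_inflate b1 hα hγ).2 hρ,
      (chain_inflate (hne τ b1) hα hγ h1 b3 b4 b2).2 hQ', τ, hτ, _, _, rfl⟩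
  · rintro ⟨τ, ρ⟩ h ⟨τ', ρ'⟩ h' e
    simp only [Finset.mem_product, Finset.mem_filter, mem_perms] at h h' e
    obtain ⟨hτ, hρ, hQ'⟩ := h
    obtain ⟨b1, b2, b3, b4⟩ := hS τ hτ
    obtain ⟨α, γ, rfl, hα, hγ⟩ := hρ.split
    obtain ⟨hτ', hρ', hQ'⟩ := h'
    obtain ⟨b1', -⟩ := hS τ' hτ'
    obtain ⟨α', γ', rfl, hα', hγ'⟩ := hρ'.split
    rw [infl_split hα hγ, infl_split hα' hγ'] at e
    have e1 := congrArg (defl c) e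
    rw [defl_split b1, defl_split b1'] at e1
    have e2 := congrArg (List.filter (· ≤ c)) e
    rw [filter_split b1 hα hγ, filter_split b1' hα' hγ'] at e2
    rw [e1, e2]
  · rintro σ h
    simp only [Finset.mem_filter, mem_perms] at h
    obtain ⟨hσ, hQ, τ, hτ, α, γ, rfl⟩ := h
    obtain ⟨b1, b2, b3, b4⟩ := hS τ hτ
    have hsh : ∀ l : List ℕ, (∀ x ∈ l, c < x) → ∃ l' : List ℕ, l = l'.map (· + c) ∧
        ∀ x ∈ l', 0 < x := by
      intro l hl
      refine ⟨l.map (· - c), ?_, ?_⟩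
      · rw [List.map_map]
        symm
        refine (List.map_congr_left (fun x hx => ?_)).trans (List.map_id l)
        have := hl x hx
        simp
        omega
      · intro x hx
        simp at hx
        obtain ⟨a, ha, rfl⟩ := hx
        have := hl a ha
        omega
    have hnd := hσ.1
    have c1 : ∀ x ∈ α, c < x := by
      intro x hx
      by_contra hxc
      have hx' : x ∈ τ := (b1.2 x).2 (by omega)
      rw [List.append_assoc, List.nodup_append] at hnd
      exact hnd.2.2 x hx x (by simp [hx']) rfl
    have c2 : ∀ x ∈ γ, c < x := by
      intro x hx
      by_contra hxc
      have hx' : x ∈ τ := (b1.2 x).2 (by omega)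
      rw [List.nodup_append] at hnd
      exact hnd.2.2 x (by simp [hx']) x hx rfl
    obtain ⟨α, rfl, hα⟩ := hsh α c1
    obtain ⟨γ, rfl, hγ⟩ := hsh γ c2
    refine ⟨(τ, α ++ 0 :: γ), ?_, infl_split hα hγ⟩
    simp only [Finset.mem_product, Finset.mem_filter, mem_perms]
    exact ⟨hτ, (isPerm_inflate b1 hα hγ).1 hσ,
      (chain_inflate (hne τ b1) hα hγ h1 b3 b4 b2).1 hQ⟩
  · rintro ⟨τ, ρ⟩ h
    simp only [Finset.mem_product, Finset.mem_filter, mem_perms] at h ⊢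
    obtain ⟨hτ, hρ, hQ'⟩ := h
    obtain ⟨b1, b2, b3, b4⟩ := hS τ hτ
    obtain ⟨α, γ, rfl, hα, hγ⟩ := hρ.split
    rw [infl_split hα hγ, occ_inflate b1 hα hγ, pow_add]


lemma chain_sub {Q : ℕ → ℕ → Prop} {σ τ : List ℕ} (h : List.IsChain Q σ) (hi : τ <:+: σ) :
    List.IsChain Q τ := by
  obtain ⟨A, C, rfl⟩ := hi
  exact h.left_of_append.right_of_append

lemma occ_eq_zero {l : List ℕ} : occ l = 0 ↔ ∀ b, ¬ IsOcc l b := by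
  unfold occ
  rw [Set.ncard_eq_zero (occ_finite l), Set.eq_empty_iff_forall_notMem]
  rfl

lemma chain_dich {Q : ℕ → ℕ → Prop} {a b : ℕ} (hQ : ∀ x y, Q x y ↔ far x y ∨ (x = a ∧ y = b))
    {σ : List ℕ} :
    List.IsChain Q σ ↔ List.IsChain far σ ∨ (List.IsChain Q σ ∧ ∃ τ ∈ ({[a, b]} : Finset (List ℕ)), τ <:+: σ) := by
  constructor
  · intro h
    by_cases hf : List.IsChain far σ
    · exact Or.inl hf
    · refine Or.inr ⟨h, ?_⟩
      rw [List.isChain_iff_forall_rel_of_append_cons_cons] at hf h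
      push Not at hf
      obtain ⟨x, y, l1, l2, e, hn⟩ := hf
      have := (hQ x y).1 (h e)
      rcases this with h1 | ⟨rfl, rfl⟩
      · exact absurd h1 hn
      · exact ⟨_, Finset.mem_singleton_self _, l1, l2, by simp [e]⟩
  · rintro (h | h)
    · exact h.imp fun x y hxy => (hQ x y).2 (Or.inl hxy)
    · exact h.1

open Classical in
lemma wsum_split {Q : ℕ → ℕ → Prop} {a b : ℕ} (hQ : ∀ x y, Q x y ↔ far x y ∨ (x = a ∧ y = b))
    (hab : ¬ far a b) (n : ℕ) :
    wsum Q n = wsum far n + ∑ σ ∈ perms n with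
      (List.IsChain Q σ ∧ ∃ τ ∈ ({[a, b]} : Finset (List ℕ)), τ <:+: σ),
      (Polynomial.X : Polynomial ℚ) ^ occ σ := by
  unfold wsum
  rw [← Finset.sum_union]
  · refine Finset.sum_congr ?_ fun _ _ => rfl
    ext σ
    simp only [Finset.mem_filter, Finset.mem_union]
    rw [chain_dich hQ]
    tauto
  · rw [Finset.disjoint_left]
    intro σ h h'
    simp only [Finset.mem_filter, Finset.mem_singleton, exists_eq_left] at h h'
    have := chain_sub h.2 h'.2.2
    simp at this
    exact hab this

lemma isPerm_10 : IsPerm 2 [1, 0] := ⟨by simp, fun x => by simp; omega⟩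
lemma isPerm_01 : IsPerm 2 [0, 1] := ⟨by simp, fun x => by simp; omega⟩

lemma isPerm_snoc {c : ℕ} {τ : List ℕ} (h : IsPerm c τ) : IsPerm (c + 1) (τ ++ [c]) := by
  refine ⟨?_, fun x => ?_⟩
  · rw [List.nodup_append]
    refine ⟨h.1, by simp, ?_⟩
    intro a ha b hb
    have := (h.2 a).1 ha
    simp at hb
    omega
  · simp [h.2]
    omega

lemma isOcc_snoc {c b : ℕ} {τ : List ℕ} (h : IsPerm c τ) (hc : 0 < c) (ho : occ τ = 0) :
    IsOcc (τ ++ [c]) b ↔ b = c := by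
  constructor
  · intro hb
    have hm := ((isPerm_snoc h).2 b).1 hb.mem
    by_contra hbc
    rw [isOcc_right (by simp; omega)] at hb
    exact occ_eq_zero.1 ho b hb
  · rintro rfl
    refine ⟨[], τ, [], by simp, ?_, fun x hx => (h.2 x).1 hx, by simp, by simp⟩
    rintro rfl
    have := (h.2 0).2 hc
    simp at this

lemma occ_snoc {c : ℕ} {τ : List ℕ} (h : IsPerm c τ) (hc : 0 < c) (ho : occ τ = 0) :
    occ (τ ++ [c]) = 1 := by
  unfold occ
  rw [Set.ncard_eq_one]
  refine ⟨c, ?_⟩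
  ext b
  exact isOcc_snoc h hc ho

lemma isPerm_zero_iff {l : List ℕ} : IsPerm 0 l ↔ l = [] := by
  constructor
  · intro h
    exact List.length_eq_zero_iff.1 h.length
  · rintro rfl
    exact ⟨by simp, by simp⟩

lemma isPerm_one_iff {l : List ℕ} : IsPerm 1 l ↔ l = [0] := by
  constructor
  · intro h
    obtain ⟨a, rfl⟩ := List.length_eq_one_iff.1 h.length
    have := (h.2 a).1 (by simp)
    simp; omega
  · rintro rfl
    exact ⟨by simp, fun x => by simp⟩

lemma occ_nil : occ [] = 0 := occ_eq_zero.2 fun b h => by simpa using h.mem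
lemma occ_sing : occ [0] = 0 := occ_eq_zero.2 fun b h => by
  have h1 := h.mem
  have h2 := h.pos
  simp at h1
  omega

lemma occ_10 : occ [1, 0] = 0 := occ_eq_zero.2 fun b h => by
  rw [show [1, 0] = [1] ++ [0] from rfl] at h
  have h1 := h.mem
  have h2 := h.pos
  obtain rfl : b = 1 := by simp at h1; omega
  obtain ⟨A, F, C, e, hF, f1, f2, f3⟩ := h
  have hm : (0 : ℕ) ∈ F := by
    obtain ⟨x, hx⟩ := List.exists_mem_of_ne_nil F hF
    have := f1 x hx
    obtain rfl : x = 0 := by omega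
    exact hx
  rcases List.eq_nil_or_concat C with rfl | ⟨C, z, rfl⟩
  · have := (List.append_inj' (e : [1] ++ [0] = (A ++ F) ++ [1]) rfl).2
    simp at this
  · have := (List.append_inj' (show [1] ++ [0] = (A ++ F ++ 1 :: C) ++ [z] by rw [e]; simp) rfl).2
    have h4 := f3 z (by simp)
    simp only [List.cons.injEq, and_true] at this
    omega

lemma occ_01 : occ [0, 1] = 1 := occ_snoc (isPerm_one_iff.2 rfl) one_pos occ_sing

lemma perms_zero : perms 0 = {[]} := by
  ext l; simp [mem_perms, isPerm_zero_iff]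
lemma perms_one : perms 1 = {[0]} := by
  ext l; simp [mem_perms, isPerm_one_iff]

lemma wsum_one (Q : ℕ → ℕ → Prop) : wsum Q 1 = 1 := by
  classical
  rw [wsum, perms_one, Finset.filter_singleton, if_pos (by simp)]
  simp [occ_sing]

lemma wsum_zero (Q : ℕ → ℕ → Prop) : wsum Q 0 = 1 := by
  classical
  rw [wsum, perms_zero, Finset.filter_singleton, if_pos (by simp)]
  simp [occ_nil]

lemma rec10 (k : ℕ) : wsum r10 (k + 2) = wsum far (k + 2) + wsum r01 (k + 1) := by
  classical
  rw [wsum_split (Q := r10) (a := 1) (b := 0) (fun x y => Iff.rfl) (by simp [far])]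
  congr 1
  have := main_sum 1 k r10 r01 {[1, 0]} (fun x y hx hy => by unfold r10 r01 far; omega) ?_
  · rw [show k + 2 = 1 + k + 1 by omega, this]
    simp [occ_10]
  · simp only [Finset.mem_singleton, forall_eq]
    refine ⟨isPerm_10, by simp [r10], ?_, ?_⟩
    · intro x hx h hh
      simp at hh
      unfold r10 r01 far; omega
    · intro x hx h hh
      simp at hh
      unfold r10 r01 far; omega

lemma rec01 (k : ℕ) : wsum r01 (k + 2) = wsum far (k + 2) + Polynomial.X * wsum r10 (k + 1) := by
  classical
  rw [wsum_split (Q := r01) (a := 0) (b := 1) (fun x y => Iff.rfl) (by simp [far])]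
  congr 1
  have := main_sum 1 k r01 r10 {[0, 1]} (fun x y hx hy => by unfold r10 r01 far; omega) ?_
  · rw [show k + 2 = 1 + k + 1 by omega, this]
    simp [occ_01]
  · simp only [Finset.mem_singleton, forall_eq]
    refine ⟨isPerm_01, by simp [r01], ?_, ?_⟩
    · intro x hx h hh
      simp at hh
      unfold r10 r01 far; omega
    · intro x hx h hh
      simp at hh
      unfold r10 r01 far; omega

open Classical in
noncomputable def avoid (n : ℕ) : Finset (List ℕ) :=
  {σ ∈ perms n | List.IsChain far σ ∧ occ σ = 0}

open Classical in
noncomputable def S (c : ℕ) : Finset (List ℕ) :=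
  if 2 ≤ c then (avoid c).image (· ++ [c]) else ∅

lemma mem_S {c : ℕ} {l : List ℕ} : l ∈ S c ↔
    2 ≤ c ∧ ∃ τ, l = τ ++ [c] ∧ IsPerm c τ ∧ List.IsChain far τ ∧ occ τ = 0 := by
  classical
  unfold S
  split_ifs with h
  · simp only [Finset.mem_image, avoid, Finset.mem_filter, mem_perms, h, true_and]
    constructor
    · rintro ⟨τ, h, rfl⟩; exact ⟨τ, rfl, h⟩
    · rintro ⟨τ, rfl, h⟩; exact ⟨τ, h, rfl⟩
  · simp [h]

lemma sub_gt {c : ℕ} {α τ γ : List ℕ} (b1 : IsPerm (c + 1) τ) (hnd : (α ++ τ ++ γ).Nodup) :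
    (∀ x ∈ α, c < x) ∧ (∀ x ∈ γ, c < x) := by
  constructor
  · intro x hx
    by_contra hxc
    have hx' : x ∈ τ := (b1.2 x).2 (by omega)
    rw [List.append_assoc, List.nodup_append] at hnd
    exact hnd.2.2 x hx x (by simp [hx']) rfl
  · intro x hx
    by_contra hxc
    have hx' : x ∈ τ := (b1.2 x).2 (by omega)
    rw [List.nodup_append] at hnd
    exact hnd.2.2 x (by simp [hx']) x hx rfl

lemma S_min {c : ℕ} {τ σ : List ℕ} (h : τ ∈ S c) (hnd : σ.Nodup) (hi : τ <:+: σ) :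
    IsOcc σ c ∧ ∀ b < c, ¬ IsOcc σ b := by
  obtain ⟨hc, τ, rfl, h1, h2, h3⟩ := mem_S.1 h
  obtain ⟨α, γ, rfl⟩ := hi
  obtain ⟨hα, hγ⟩ := sub_gt (isPerm_snoc h1) hnd
  have key : ∀ b ≤ c, (IsOcc (α ++ (τ ++ [c]) ++ γ) b ↔ b = c) := by
    intro b hb
    rw [isOcc_low (fun x hx => lt_of_le_of_lt hb (hα x hx))
      (fun x hx => lt_of_le_of_lt hb (hγ x hx)), isOcc_snoc h1 (by omega) h3]
  refine ⟨(key c le_rfl).2 rfl, fun b hb hh => ?_⟩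
  have := (key b hb.le).1 hh
  omega

lemma S_exists {n : ℕ} {σ : List ℕ} (hp : IsPerm n σ) (hk : List.IsChain far σ) (ho : occ σ ≠ 0) :
    ∃ c < n, ∃ τ ∈ S c, τ <:+: σ := by
  classical
  have hex : ∃ b, IsOcc σ b := by
    by_contra hcon
    push Not at hcon
    exact ho (occ_eq_zero.2 hcon)
  have hc := Nat.find_spec hex
  have hmin := fun b hb => Nat.find_min (m := b) hex hb
  generalize Nat.find hex = c at hc hmin
  refine ⟨c, (hp.2 c).1 hc.mem, ?_⟩
  have hpos := hc.pos
  obtain ⟨A, F, C, rfl, hF, h1, h2, h3⟩ := hc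
  have hnd := hp.1
  have hcn := (hp.2 c).1 (by simp)
  have hFp : IsPerm c F := by
    refine ⟨?_, fun x => ⟨h1 x, fun hx => ?_⟩⟩
    · rw [List.nodup_append, List.nodup_append] at hnd
      exact hnd.1.2.1
    · have := (hp.2 x).2 (by omega)
      simp at this
      rcases this with h | h | h | h
      · have := h2 x h; omega
      · exact h
      · omega
      · have := h3 x h; omega
  refine ⟨F ++ [c], mem_S.2 ⟨?_, F, rfl, hFp, ?_, ?_⟩, A, C, by simp⟩
  · by_contra hc2
    obtain rfl : c = 1 := by omega
    obtain rfl := isPerm_one_iff.1 hFp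
    have : [0, 1] <:+: A ++ [0] ++ 1 :: C := ⟨A, C, by simp⟩
    have := chain_sub hk this
    simp [far] at this
  · exact chain_sub hk ⟨A, c :: C, by simp⟩
  · rw [occ_eq_zero]
    intro b hb
    have hbc := (hFp.2 b).1 hb.mem
    refine hmin b hbc ?_
    rw [isOcc_low (fun x hx => hbc.trans (h2 x hx))]
    · exact hb
    · intro x hx
      simp at hx
      rcases hx with rfl | hx
      · exact hbc
      · exact hbc.trans (h3 x hx)

lemma sum_S (c : ℕ) : ∑ τ ∈ S c, (Polynomial.X : Polynomial ℚ) ^ occ τ =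
    Polynomial.X * (if 2 ≤ c then ((avoid c).card : Polynomial ℚ) else 0) := by
  classical
  have : ∀ τ ∈ S c, (Polynomial.X : Polynomial ℚ) ^ occ τ = Polynomial.X := by
    intro τ hτ
    obtain ⟨hc, τ, rfl, h1, h2, h3⟩ := mem_S.1 hτ
    rw [occ_snoc h1 (by omega) h3, pow_one]
  rw [Finset.sum_congr rfl this, Finset.sum_const, S]
  split_ifs with h
  · rw [Finset.card_image_of_injective]
    · simp [mul_comm]
    · intro x y hxy
      simpa using hxy
  · simp

lemma rec_main (n : ℕ) : wsum far n = ((avoid n).card : Polynomial ℚ) +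
    Polynomial.X * ∑ c ∈ Finset.range n, (if 2 ≤ c then ((avoid c).card : Polynomial ℚ) else 0) *
      wsum r10 (n - c) := by
  classical
  rw [wsum, ← Finset.sum_filter_add_sum_filter_not _ (fun σ => occ σ = 0)]
  congr 1
  · rw [Finset.filter_filter]
    have : ∀ τ ∈ avoid n, (Polynomial.X : Polynomial ℚ) ^ occ τ = 1 := by
      intro τ hτ
      simp only [avoid, Finset.mem_filter] at hτ
      rw [hτ.2.2, pow_zero]
    have h2 := Finset.sum_congr rfl this
    simp only [Finset.sum_const, nsmul_eq_mul, mul_one] at h2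
    rw [← h2]
    rfl
  · have hset : ((perms n).filter (fun σ => List.IsChain far σ)).filter (fun σ => ¬ occ σ = 0) =
        (Finset.range n).biUnion (fun c => (perms n).filter
          (fun σ => List.IsChain far σ ∧ ∃ τ ∈ S c, τ <:+: σ)) := by
      ext σ
      simp only [Finset.mem_filter, Finset.mem_biUnion, Finset.mem_range, mem_perms]
      constructor
      · rintro ⟨⟨h1, h2⟩, h3⟩
        obtain ⟨c, hc, h⟩ := S_exists h1 h2 h3
        exact ⟨c, hc, h1, h2, h⟩
      · rintro ⟨c, hc, h1, h2, τ, hτ, hi⟩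
        refine ⟨⟨h1, h2⟩, fun h0 => ?_⟩
        exact occ_eq_zero.1 h0 c (S_min hτ h1.1 hi).1
    rw [hset, Finset.sum_biUnion, Finset.mul_sum]
    · refine Finset.sum_congr rfl fun c hc => ?_
      rw [Finset.mem_range] at hc
      obtain ⟨k, rfl⟩ : ∃ k, n = c + k + 1 := ⟨n - c - 1, by omega⟩
      rw [← mul_assoc, ← sum_S, show c + k + 1 - c = k + 1 by omega]
      by_cases h2c : 2 ≤ c
      · apply main_sum c k far r10 (S c)
        · intro x y hx hy
          unfold r10 far; omega
        · intro τ hτ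
          obtain ⟨hc, τ, rfl, h1, h2, h3⟩ := mem_S.1 hτ
          have hne : τ ≠ [] := by
            rintro rfl
            have := (h1.2 0).2 (by omega)
            simp at this
          refine ⟨isPerm_snoc h1, ?_, ?_, ?_⟩
          · rw [List.isChain_append]
            refine ⟨h2, by simp, ?_⟩
            intro x hx y hy
            simp at hy
            subst hy
            have hlt := (h1.2 x).1 (List.mem_of_mem_getLast? hx)
            left
            by_contra hcon
            obtain ⟨c, rfl⟩ : ∃ d, c = d + 1 := ⟨c - 1, by omega⟩
            obtain rfl : x = c := by omega
            obtain ⟨τ', rfl⟩ := List.getLast?_eq_some_iff.1 hx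
            refine occ_eq_zero.1 h3 x ⟨[], τ', [], by simp, ?_, ?_, by simp, by simp⟩
            · rintro rfl
              have := h1.length
              simp at this
              omega
            · intro y hy
              have hy1 := (h1.2 y).1 (by simp [hy])
              have hnd := h1.1
              rw [List.nodup_append] at hnd
              have := hnd.2.2 y hy x (by simp)
              omega
          · intro x hx h hh
            have : h ∈ τ := by
              rw [List.head?_append_of_ne_nil _ hne] at hh
              exact List.mem_of_mem_head? hh
            have := (h1.2 h).1 this
            unfold r10 far; omega
          · intro y hy h hh
            simp at hh
            unfold r10 far; omega
      · simp [S, h2c]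
    · intro c hc d hd hcd
      simp only [Function.onFun]
      rw [Finset.disjoint_left]
      intro σ h h'
      simp only [Finset.mem_filter, mem_perms] at h h'
      obtain ⟨h1, h2, τ, hτ, hi⟩ := h
      obtain ⟨-, -, τ', hτ', hi'⟩ := h'
      have a := S_min hτ h1.1 hi
      have a' := S_min hτ' h1.1 hi'
      rcases lt_trichotomy c d with h | h | h
      · exact a'.2 c h a.1
      · exact hcd h
      · exact a.2 d h a'.1

def toL {n : ℕ} (σ : Equiv.Perm (Fin n)) : List ℕ := List.ofFn fun i => (σ i : ℕ)

lemma toL_length {n : ℕ} (σ : Equiv.Perm (Fin n)) : (toL σ).length = n := by simp [toL]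

lemma toL_get {n : ℕ} (σ : Equiv.Perm (Fin n)) (k : ℕ) (h : k < (toL σ).length) :
    (toL σ)[k] = σ ⟨k, by simpa [toL] using h⟩ := by simp [toL]

lemma toL_perm {n : ℕ} (σ : Equiv.Perm (Fin n)) : IsPerm n (toL σ) := by
  refine ⟨?_, fun x => ?_⟩
  · rw [toL, List.nodup_ofFn]
    intro i j h
    exact σ.injective (Fin.ext h)
  · simp only [toL, List.mem_ofFn]
    constructor
    · rintro ⟨i, rfl⟩; exact (σ i).2
    · intro hx
      exact ⟨σ.symm ⟨x, hx⟩, by simp⟩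

lemma toL_inj {n : ℕ} : Function.Injective (toL (n := n)) := by
  intro σ τ h
  have := List.ofFn_injective h
  ext i
  exact congrFun this i

lemma toL_surj {n : ℕ} {l : List ℕ} (h : IsPerm n l) : ∃ σ : Equiv.Perm (Fin n), toL σ = l := by
  have hl := h.length
  subst hl
  have hinj : Function.Injective (fun i : Fin l.length =>
      (⟨l[i], (h.2 _).1 (List.getElem_mem _)⟩ : Fin l.length)) := by
    intro i j hij
    simp only [Fin.mk.injEq] at hij
    exact Fin.ext ((List.Nodup.getElem_inj_iff h.1).1 hij)
  refine ⟨Equiv.ofBijective _ ((Fintype.bijective_iff_injective_and_card _).2 ⟨hinj, rfl⟩), ?_⟩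
  apply List.ext_getElem (by simp [toL])
  intro i h1 h2
  simp [toL]

lemma king_iff {n : ℕ} (σ : Equiv.Perm (Fin n)) : IsKing σ ↔ List.IsChain far (toL σ) := by
  rw [List.isChain_iff_getElem]
  constructor
  · intro h i hi
    rw [toL_length] at hi
    have := h ⟨i, by omega⟩ hi
    rw [toL_get, toL_get]
    rw [lt_abs] at this
    unfold far
    simp only at this
    omega
  · intro h i hi
    have := h i (by rwa [toL_length])
    rw [toL_get, toL_get] at this
    rw [lt_abs]
    unfold far at this
    simp only [Fin.eta] at this
    omega

lemma isOcc_toL {n : ℕ} (σ : Equiv.Perm (Fin n)) (b : ℕ) :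
    IsOcc (toL σ) b ↔ ∃ i j, OccP σ i j ∧ (σ j : ℕ) = b := by
  constructor
  · rintro ⟨A, F, C, e, hF, h1, h2, h3⟩
    have hlen : n = A.length + F.length + (C.length + 1) := by
      rw [← toL_length σ, e]; simp; omega
    have hFl : 0 < F.length := List.length_pos_iff.2 hF
    have hg : ∀ k : Fin n, (σ k : ℕ) = (A ++ F ++ b :: C)[k.1]'(by simp; omega) := by
      intro k
      have := toL_get σ k.1 (by rw [toL_length]; exact k.2)
      simp only [Fin.eta] at this
      rw [← this]
      simp only [e]
    have g1 : ∀ k : Fin n, k.1 < A.length → b < σ k := by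
      intro k hk
      rw [hg, List.getElem_append_left (by simp; omega), List.getElem_append_left hk]
      exact h2 _ (List.getElem_mem _)
    have g2 : ∀ k : Fin n, A.length ≤ k.1 → k.1 < A.length + F.length → σ k < b := by
      intro k hk hk'
      rw [hg, List.getElem_append_left (by simp; omega), List.getElem_append_right hk]
      exact h1 _ (List.getElem_mem _)
    have g3 : ∀ k : Fin n, k.1 = A.length + F.length → σ k = b := by
      intro k hk
      rw [hg, List.getElem_append_right (by simp; omega)]
      simp [hk]
    have g4 : ∀ k : Fin n, A.length + F.length < k.1 → b < σ k := by
      intro k hk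
      rw [hg, List.getElem_append_right (by simp; omega), List.getElem_cons,
        dif_neg (by simp; omega)]
      exact h3 _ (List.getElem_mem _)
    refine ⟨⟨A.length, by omega⟩, ⟨A.length + F.length, by omega⟩, ?_, g3 _ rfl⟩
    have hb := g3 ⟨A.length + F.length, by omega⟩ rfl
    refine ⟨?_, ?_, ?_, ?_, ?_⟩
    · simp [Fin.lt_def]; omega
    · rw [Fin.lt_def, hb]
      exact g2 _ (by simp) (by simp; omega)
    · intro k hk
      rw [Fin.lt_def, hb]
      exact g1 _ hk
    · intro k hk hk'
      rw [Fin.lt_def, hb]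
      exact g2 _ (le_of_lt hk) hk'
    · intro k hk
      rw [Fin.lt_def, hb]
      exact g4 _ hk
  · rintro ⟨i, j, ⟨h1, h2, h3, h4, h5⟩, rfl⟩
    have hl := toL_length σ
    have hij : i.1 < j.1 := h1
    have hj := j.2
    refine ⟨(toL σ).take i, ((toL σ).take j).drop i, (toL σ).drop (j + 1), ?_, ?_, ?_, ?_, ?_⟩
    · have e1 : (toL σ).take i = ((toL σ).take j).take i := by
        rw [List.take_take, min_eq_left hij.le]
      rw [e1, List.take_append_drop]
      have : (σ j : ℕ) = (toL σ)[j.1]'(by omega) := by rw [toL_get]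
      rw [this, ← List.drop_eq_getElem_cons, List.take_append_drop]
    · rw [← List.length_pos_iff]
      simp [hl]
      omega
    · intro x hx
      obtain ⟨k, hk, rfl⟩ := List.mem_iff_getElem.1 hx
      simp only [List.length_drop, List.length_take, hl] at hk
      rw [List.getElem_drop, List.getElem_take, toL_get]
      rcases Nat.eq_zero_or_pos k with rfl | hk0
      · exact h2
      · exact h4 _ (by rw [Fin.lt_def]; simp; omega) (by rw [Fin.lt_def]; simp; omega)
    · intro x hx
      obtain ⟨k, hk, rfl⟩ := List.mem_iff_getElem.1 hx
      simp only [List.length_take, hl] at hk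
      rw [List.getElem_take, toL_get]
      exact h3 _ (by rw [Fin.lt_def]; simp; omega)
    · intro x hx
      obtain ⟨k, hk, rfl⟩ := List.mem_iff_getElem.1 hx
      simp only [List.length_drop, hl] at hk
      rw [List.getElem_drop, toL_get]
      exact h5 _ (by rw [Fin.lt_def]; simp; omega)

lemma occP_eq {n : ℕ} (σ : Equiv.Perm (Fin n)) : occP σ = occ (toL σ) := by
  unfold occP occ
  rw [← Nat.card_coe_set_eq]
  refine Nat.card_eq_of_bijective
    (fun p => ⟨(σ p.1.2 : ℕ), (isOcc_toL σ _).2 ⟨p.1.1, p.1.2, p.2, rfl⟩⟩) ⟨?_, ?_⟩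
  · rintro ⟨⟨i, j⟩, h⟩ ⟨⟨i', j'⟩, h'⟩ e
    simp only [Subtype.mk.injEq] at e
    obtain rfl : j = j' := σ.injective (Fin.ext e)
    have : i = i' := by
      rcases lt_trichotomy i i' with hlt | heq | hlt
      · exact absurd (h'.2.2.1 i hlt) (not_lt.2 h.2.1.le)
      · exact heq
      · exact absurd (h.2.2.1 i' hlt) (not_lt.2 h'.2.1.le)
    subst this
    rfl
  · rintro ⟨b, hb⟩
    obtain ⟨i, j, h, rfl⟩ := (isOcc_toL σ b).1 hb
    exact ⟨⟨(i, j), h⟩, rfl⟩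

lemma sum_toL {M : Type*} [AddCommMonoid M] (n : ℕ) (f : List ℕ → M) :
    ∑ σ : Equiv.Perm (Fin n), f (toL σ) = ∑ l ∈ perms n, f l := by
  refine Finset.sum_bij (fun σ _ => toL σ) ?_ ?_ ?_ ?_
  · intro σ _; exact mem_perms.2 (toL_perm σ)
  · intro σ _ τ _ h; exact toL_inj h
  · intro l hl
    obtain ⟨σ, rfl⟩ := toL_surj (mem_perms.1 hl)
    exact ⟨σ, Finset.mem_univ _, rfl⟩
  · intros; rfl

lemma coeff_E (n : ℕ) : PowerSeries.coeff n Etu = wsum far n := by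
  classical
  rw [Etu, PowerSeries.coeff_mk, wsum, Finset.sum_filter, ← sum_toL]
  refine Finset.sum_congr rfl fun σ _ => ?_
  simp only [king_iff, occP_eq]

lemma kingCount_eq (n : ℕ) : (kingCount n : ℚ) = (wsum far n).eval 1 := by
  classical
  rw [kingCount, wsum, Finset.sum_filter, ← sum_toL, Polynomial.eval_finsetSum,
    Nat.card_eq_fintype_card, Fintype.card_subtype, Finset.card_filter]
  push_cast
  refine Finset.sum_congr rfl fun σ _ => ?_
  by_cases h : IsKing σ
  · have h' := (king_iff σ).1 h
    simp [h, h']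
  · have h' : ¬ List.IsChain far (toL σ) := fun h' => h ((king_iff σ).2 h')
    simp [h, h']

lemma avoid_eq (n : ℕ) : Nat.card {σ : Equiv.Perm (Fin n) // IsKing σ ∧ occP σ = 0} =
    (avoid n).card := by
  classical
  rw [avoid, Finset.card_filter, ← sum_toL,
    Nat.card_eq_fintype_card, Fintype.card_subtype, Finset.card_filter]
  refine Finset.sum_congr rfl fun σ _ => ?_
  simp only [king_iff, occP_eq]

lemma avoid_zero : (avoid 0).card = 1 := by
  classical
  rw [avoid, perms_zero, Finset.filter_singleton, if_pos (by simp [occ_nil])]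
  simp
lemma avoid_one : (avoid 1).card = 1 := by
  classical
  rw [avoid, perms_one, Finset.filter_singleton, if_pos (by simp [occ_sing])]
  simp

open PowerSeries in
lemma series_main :
    Etu * (1 - U * T ^ 2) = PowerSeries.map Polynomial.C Pav * (1 - U * T ^ 2) +
      U * (1 + T) * (PowerSeries.map Polynomial.C Pav - 1 - T) * (Etu - 1) := by
  set P := PowerSeries.map Polynomial.C Pav with hP
  have cP : ∀ n, coeff n P = ((avoid n).card : Polynomial ℚ) := by
    intro n
    rw [hP, coeff_map, Pav, coeff_mk, avoid_eq]
    simp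
  let Eh : PowerSeries (Polynomial ℚ) := PowerSeries.mk fun k => wsum far (k + 1)
  let Rh : PowerSeries (Polynomial ℚ) := PowerSeries.mk fun k => wsum r10 (k + 1)
  let Sh : PowerSeries (Polynomial ℚ) := PowerSeries.mk fun k => wsum r01 (k + 1)
  let Qh : PowerSeries (Polynomial ℚ) := PowerSeries.mk fun c =>
    if 2 ≤ c then ((avoid c).card : Polynomial ℚ) else 0
  have hE : Etu = 1 + T * Eh := by
    ext1 n
    rw [coeff_E, T]
    cases n with
    | zero => simp [wsum_zero]
    | succ n => simp [coeff_succ_X_mul, Eh, PowerSeries.coeff_one]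
  have hR : Rh = Eh + T * Sh := by
    ext1 n
    rw [T]
    cases n with
    | zero => simp [Rh, Eh, wsum_one]
    | succ n => simp [coeff_succ_X_mul, Rh, Eh, Sh, rec10]
  have hS : Sh = Eh + U * (T * Rh) := by
    ext1 n
    rw [T, U, map_add, coeff_C_mul]
    cases n with
    | zero => simp [Sh, Eh, wsum_one]
    | succ n => simp [coeff_succ_X_mul, Rh, Eh, Sh, rec01]
  have hQ : Qh = P - 1 - T := by
    ext1 n
    rw [map_sub, map_sub, cP, T]
    rcases n with _ | _ | n
    · simp [Qh, avoid_zero]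
    · simp [Qh, avoid_one, PowerSeries.coeff_one]
    · simp [Qh, PowerSeries.coeff_one, PowerSeries.coeff_X]
  have hM : Etu = P + U * (T * (Qh * Rh)) := by
    ext1 n
    rw [coeff_E, rec_main, T, U, map_add, coeff_C_mul, cP]
    congr 2
    cases n with
    | zero => simp
    | succ n =>
      rw [coeff_succ_X_mul, coeff_mul, Finset.Nat.sum_antidiagonal_eq_sum_range_succ_mk]
      refine Finset.sum_congr rfl fun c hc => ?_
      rw [Finset.mem_range] at hc
      simp only [Qh, Rh, coeff_mk]
      rw [show n + 1 - c = n - c + 1 by omega]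
  have hRE : Rh * (1 - U * T ^ 2) = (1 + T) * Eh := by
    linear_combination hR + T * hS
  have hE' : Etu - 1 = T * Eh := by rw [hE]; ring
  rw [hE', ← hQ]
  linear_combination (1 - U * T ^ 2) * hM + U * T * Qh * hRE

open PowerSeries in
lemma map_one_E : PowerSeries.map (Polynomial.evalRingHom (1 : ℚ)) Etu = kingA := by
  ext n
  rw [coeff_map, coeff_E, kingA, coeff_mk, kingCount_eq]
  simp

open PowerSeries in
lemma avoid_id : (kingA - PowerSeries.X) * Pav = 2 * kingA - PowerSeries.X - 1 := by
  have h := congrArg (PowerSeries.map (Polynomial.evalRingHom (1 : ℚ))) series_main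
  have hU : PowerSeries.map (Polynomial.evalRingHom (1 : ℚ)) U = 1 := by
    simp [U]
  have hT : PowerSeries.map (Polynomial.evalRingHom (1 : ℚ)) T = PowerSeries.X := by
    simp [T]
  have hP : PowerSeries.map (Polynomial.evalRingHom (1 : ℚ)) (PowerSeries.map Polynomial.C Pav) =
      Pav := by
    ext n
    simp
  simp only [map_mul, map_add, map_sub, map_pow, map_one, hU, hT, hP, map_one_E] at h
  have hne : (1 + PowerSeries.X : PowerSeries ℚ) ≠ 0 := by
    intro h0
    have := congrArg (PowerSeries.constantCoeff (R := ℚ)) h0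
    simp at this
  apply mul_left_cancel₀ hne
  linear_combination -h

lemma kingAu_eq : kingAu = PowerSeries.map Polynomial.C kingA := by
  ext1 n
  simp [kingAu, kingA]

end KingAux

open KingAux in
theorem statement_18 :
    (U - T * (1 - U + U * T) + (1 - U) * kingAu) * Etu
      = (2 - U - U * T ^ 2) * kingAu - (1 - U) * (1 + T) ∧
    (kingA - PowerSeries.X) * Pav = 2 * kingA - PowerSeries.X - 1 := by
  refine ⟨?_, avoid_id⟩
  have h := series_main
  have h2 := congrArg (PowerSeries.map (Polynomial.C (R := ℚ))) avoid_id
  have hX : PowerSeries.map (Polynomial.C (R := ℚ)) PowerSeries.X = T := by simp [T]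
  simp only [map_mul, map_sub, map_one, map_ofNat, hX, ← kingAu_eq] at h2
  generalize PowerSeries.map (Polynomial.C (R := ℚ)) Pav = P at h h2
  linear_combination (kingAu - T) * h + (1 - U * T ^ 2 + U * (1 + T) * (Etu - 1)) * h2
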